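/- arXiv:1807.06549 — 2 statements merged into one kernel-verified Lean document; each statement's English description precedes it below -/
import Mathlib

section
/- Let σ > 0 and μ ≥ 0 be constants with 2 < 2μσ + σ²π². Set s := (μσ−1)/σ², p(s,θ) := |s|/(s + (π−θ)²) and g(s) := inf{ 1/(sin(θ)(1 − p(s,θ))) : 0 < θ < π − √(|s| − s) }. Then for every bounded d ∈ C²([0,∞);ℝ) and every classical solution u of the damped wave system with boundary input d, it holds that limsup_{t→+∞} ( max_{x∈[0,1]} |u(t,x)| ) ≤ g(s) · sup_{t≥0} |d(t)|. -/
/-!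
Put `s = (μσ - 1)/σ²` and `R = u_t - σ u_xx + σ s u`. The wave equation is equivalent to the system
`u_t = σ u_xx - σ s u + R`, `R_t = s u - R/σ`: a heat equation coupled, pointwise in `x`, to a
linear ODE in time.

Such a system obeys a comparison principle with `|s|` in place of `s` in the second equation. For
admissible `θ` choose `a < π - θ` with `a² > |s| - s`; then `sin(θ + ax) > 0` on `[0,1]`, and
`b = sin(θ + ax) (D / sin θ + K e^{-εt})`, `Q = sin(θ + ax) (σ|s| D / sin θ + κ K e^{-εt})` is a
strict supersolution as soon as `σ|s| < κ < σ(a² + s)` and `ε > 0` is small, while `K` large takes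
care of the initial data. Hence `|u| < b` when `|d| ≤ D`, and letting `t → ∞` gives the gain
`1 / sin θ`, which is at most `1 / (sin θ (1 - p(s,θ)))` because `0 ≤ p < 1`. The condition
`2 < 2μσ + σ²π²` amounts to `√(|s| - s) < π`, i.e. some `θ` is admissible and `g(s)` is not the junk
infimum of the empty set.
-/

open Real Filter MeasureTheory intervalIntegral Set

noncomputable section

/-- Time derivative ∂u/∂t. -/
def u_t (u : ℝ → ℝ → ℝ) (t x : ℝ) : ℝ := deriv (fun τ => u τ x) t

/-- Second time derivative ∂²u/∂t². -/
def u_tt (u : ℝ → ℝ → ℝ) (t x : ℝ) : ℝ := deriv (deriv (fun τ => u τ x)) t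

/-- Second space derivative ∂²u/∂x². -/
def u_xx (u : ℝ → ℝ → ℝ) (t x : ℝ) : ℝ := deriv (deriv (fun y => u t y)) x

/-- Mixed derivative ∂³u/∂t∂x². -/
def u_txx (u : ℝ → ℝ → ℝ) (t x : ℝ) : ℝ := deriv (deriv (fun y => u_t u t y)) x

/-- A classical solution of the wave equation with Kelvin-Voigt and viscous damping
with boundary input `d`: `u` is of class `C²`, `x ↦ ∂u/∂t(t,x)` is of class `C²` for
each `t ≥ 0`, the PDE holds for `t ≥ 0`, `x ∈ [0,1]`, and `u(t,0) = d(t)`, `u(t,1) = 0`. -/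
def IsClassicalSolution (σ μ : ℝ) (d : ℝ → ℝ) (u : ℝ → ℝ → ℝ) : Prop :=
  ContDiff ℝ 2 (Function.uncurry u) ∧
  (∀ t : ℝ, 0 ≤ t → ContDiff ℝ 2 (fun x => u_t u t x)) ∧
  (∀ t x : ℝ, 0 ≤ t → x ∈ Set.Icc (0:ℝ) 1 →
    u_tt u t x = u_xx u t x + σ * u_txx u t x - μ * u_t u t x) ∧
  (∀ t : ℝ, 0 ≤ t → u t 0 = d t ∧ u t 1 = 0)

/-- A bounded disturbance of class `C²`. -/
def BddC2 (d : ℝ → ℝ) : Prop :=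
  ContDiff ℝ 2 d ∧ ∃ M : ℝ, ∀ t : ℝ, 0 ≤ t → |d t| ≤ M

/-- `sup_{t ≥ 0} |d(t)|`. -/
def supD (d : ℝ → ℝ) : ℝ := sSup {y : ℝ | ∃ t : ℝ, 0 ≤ t ∧ y = |d t|}

/-- `max_{x ∈ [0,1]} |u(t,x)|`, the spatial sup norm of the displacement. -/
def supNorm (u : ℝ → ℝ → ℝ) (t : ℝ) : ℝ :=
  sSup {y : ℝ | ∃ x ∈ Set.Icc (0:ℝ) 1, y = |u t x|}

/-- `(∫₀¹ u(t,x)² dx)^{1/2}`, the spatial L² norm of the displacement. -/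
def L2Norm (u : ℝ → ℝ → ℝ) (t : ℝ) : ℝ := Real.sqrt (∫ x in (0:ℝ)..1, (u t x) ^ 2)

/-- `p(s,θ) := |s|/(s + (π−θ)²)`. -/
def pfun (s θ : ℝ) : ℝ := |s| / (s + (π - θ) ^ 2)

/-- `g(s) := inf{ 1/(sin(θ)(1 − p(s,θ))) : 0 < θ < π − √(|s| − s) }`. -/
def gfun (s : ℝ) : ℝ :=
  sInf {y : ℝ | ∃ θ : ℝ, 0 < θ ∧ θ < π - Real.sqrt (|s| - s) ∧
    y = 1 / (Real.sin θ * (1 - pfun s θ))}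

section Calculus

lemma deriv_deriv_nonpos_of_isLocalMax {f : ℝ → ℝ} {x : ℝ} (h : IsLocalMax f x)
    (hf : ContinuousAt f x) : deriv (deriv f) x ≤ 0 := by
  by_contra! hpos
  have hmin : IsLocalMin f x := isLocalMin_of_deriv_deriv_pos hpos h.deriv_eq_zero hf
  have hconst : f =ᶠ[nhds x] fun _ => f x := by
    filter_upwards [h, hmin] with y hle hge using le_antisymm hle hge
  simp [hconst.deriv.deriv_eq] at hpos

lemma deriv_deriv_le_of_eventually_le {f g : ℝ → ℝ} {x : ℝ} (hf : ContDiffAt ℝ 2 f x)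
    (hg : ContDiffAt ℝ 2 g x) (hle : f ≤ᶠ[nhds x] g) (heq : f x = g x) :
    deriv (deriv f) x ≤ deriv (deriv g) x := by
  have hmax : IsLocalMax (f - g) x := by
    filter_upwards [hle] with y hy
    simpa [heq] using hy
  have hsub : deriv (deriv (f - g)) x = deriv (deriv f) x - deriv (deriv g) x := by
    simpa [iteratedDeriv_eq_iterate] using iteratedDeriv_sub (n := 2) hf hg
  have := deriv_deriv_nonpos_of_isLocalMax hmax (hf.continuousAt.sub hg.continuousAt)
  linarith

lemma deriv_le_deriv_of_eventually_le_left {f g : ℝ → ℝ} {t : ℝ} (hf : DifferentiableAt ℝ f t)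
    (hg : DifferentiableAt ℝ g t) (hle : f ≤ᶠ[nhdsWithin t (Iio t)] g) (heq : f t = g t) :
    deriv g t ≤ deriv f t := by
  refine le_of_tendsto_of_tendsto (hg.hasDerivAt.tendsto_slope.mono_left (nhdsLT_le_nhdsNE t))
    (hf.hasDerivAt.tendsto_slope.mono_left (nhdsLT_le_nhdsNE t)) ?_
  filter_upwards [hle, self_mem_nhdsWithin] with τ hτ hτt
  rw [slope_def_field, slope_def_field, heq]
  exact div_le_div_of_nonpos_of_le (sub_neg.2 hτt).le (sub_le_sub_right hτ _)

lemma nonpos_of_deriv_le_mul {w : ℝ → ℝ} {k a b : ℝ} (hab : a ≤ b)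
    (hc : ContinuousOn w (Icc a b)) (hd : ∀ t ∈ Ioo a b, DifferentiableAt ℝ w t)
    (hw : ∀ t ∈ Ioo a b, deriv w t ≤ k * w t) (ha : w a ≤ 0) : w b ≤ 0 := by
  have hder : ∀ t ∈ Ioo a b, HasDerivAt (fun t => exp (-(k * t)) * w t)
      (exp (-(k * t)) * (deriv w t - k * w t)) t := by
    intro t ht
    have hexp : HasDerivAt (fun t => exp (-(k * t))) (exp (-(k * t)) * -(k * 1)) t :=
      ((hasDerivAt_id t).const_mul k).neg.exp
    exact (hexp.mul (hd t ht).hasDerivAt).congr_deriv (by ring)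
  have hanti : AntitoneOn (fun t => exp (-(k * t)) * w t) (Icc a b) := by
    refine antitoneOn_of_hasDerivWithinAt_nonpos (convex_Icc a b) (by fun_prop)
      (f' := fun t => exp (-(k * t)) * (deriv w t - k * w t)) ?_ ?_ <;> rw [interior_Icc]
    · exact fun t ht => (hder t ht).hasDerivWithinAt
    · exact fun t ht => mul_nonpos_of_nonneg_of_nonpos (exp_pos _).le (sub_nonpos.2 (hw t ht))
  have hle : exp (-(k * b)) * w b ≤ 0 :=
    (hanti (left_mem_Icc.2 hab) (right_mem_Icc.2 hab) hab).trans
      (mul_nonpos_of_nonneg_of_nonpos (exp_pos _).le ha)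
  exact nonpos_of_mul_nonpos_right hle (exp_pos _)

lemma norm_sub_sub_smul_le_of_norm_hasDerivAt_sub_le {E : Type*} [NormedAddCommGroup E]
    [NormedSpace ℝ E] {f f' : ℝ → E} {v : E} {η : ℝ} {S : Set ℝ} (hS : Convex ℝ S)
    (hf : ∀ y ∈ S, HasDerivAt f (f' y) y) (hv : ∀ y ∈ S, ‖f' y - v‖ ≤ η) {x₀ x : ℝ}
    (hx₀ : x₀ ∈ S) (hx : x ∈ S) : ‖f x - f x₀ - (x - x₀) • v‖ ≤ η * ‖x - x₀‖ := by
  have h := hS.norm_image_sub_le_of_norm_hasDerivWithin_le (f := fun y => f y - y • v)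
    (f' := fun y => f' y - (1 : ℝ) • v)
    (fun y hy => ((hf y hy).sub ((hasDerivAt_id y).smul_const v)).hasDerivWithinAt)
    (fun y hy => by simpa only [one_smul] using hv y hy) hx₀ hx
  convert h using 2
  module

lemma norm_second_difference_sub_smul_le {E : Type*} [NormedAddCommGroup E] [NormedSpace ℝ E]
    {g gt c : ℝ → ℝ → E} {v : E} {η : ℝ} {I J : Set ℝ} (hI : Convex ℝ I) (hJ : Convex ℝ J)
    (hgt : ∀ t ∈ I, ∀ x ∈ J, HasDerivAt (fun t => g t x) (gt t x) t)
    (hgtx : ∀ t ∈ I, ∀ x ∈ J, HasDerivAt (gt t) (c t x) x)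
    (hc : ∀ t ∈ I, ∀ x ∈ J, ‖c t x - v‖ ≤ η) {t₀ t x₀ x : ℝ} (ht₀ : t₀ ∈ I) (ht : t ∈ I)
    (hx₀ : x₀ ∈ J) (hx : x ∈ J) :
    ‖g t x - g t x₀ - (g t₀ x - g t₀ x₀) - (t - t₀) • (x - x₀) • v‖
      ≤ η * ‖x - x₀‖ * ‖t - t₀‖ :=
  norm_sub_sub_smul_le_of_norm_hasDerivAt_sub_le (f := fun τ => g τ x - g τ x₀) hI
    (fun τ hτ => (hgt τ hτ x hx).sub (hgt τ hτ x₀ hx₀))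
    (fun τ hτ => norm_sub_sub_smul_le_of_norm_hasDerivAt_sub_le hJ (hgtx τ hτ) (hc τ hτ) hx₀ hx)
    ht₀ ht

/- Peano's form of the symmetry of second derivatives: no derivative of `gx` is assumed to exist.
The second difference of `g` over a small rectangle is close to the area times `c t₀ x₀`. -/
theorem hasDerivAt_of_mixed_partial_continuousAt {E : Type*} [NormedAddCommGroup E]
    [NormedSpace ℝ E] {g gt c : ℝ → ℝ → E} {gx : ℝ → E} {t₀ x₀ : ℝ}
    (hgx : ∀ᶠ t in nhds t₀, HasDerivAt (g t) (gx t) x₀)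
    (hgt : ∀ᶠ z in nhds (t₀, x₀), HasDerivAt (fun t => g t z.2) (gt z.1 z.2) z.1)
    (hgtx : ∀ᶠ z in nhds (t₀, x₀), HasDerivAt (gt z.1) (c z.1 z.2) z.2)
    (hc : ContinuousAt (Function.uncurry c) (t₀, x₀)) :
    HasDerivAt gx (c t₀ x₀) t₀ := by
  rw [hasDerivAt_iff_isLittleO, Asymptotics.isLittleO_iff]
  intro η hη
  have hcη : ∀ᶠ z in nhds (t₀, x₀), ‖c z.1 z.2 - c t₀ x₀‖ ≤ η := by
    filter_upwards [hc (Metric.closedBall_mem_nhds _ hη)] with z hz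
    simpa [Function.uncurry, dist_eq_norm] using hz
  obtain ⟨δ, hδ, hball⟩ := Metric.eventually_nhds_iff_ball.1 ((hgt.and hgtx).and hcη)
  have hrect : ∀ t ∈ Metric.ball t₀ δ, ∀ x ∈ Metric.ball x₀ δ, _ := fun t ht x hx =>
    hball (t, x) (by rw [← ball_prod_same]; exact ⟨ht, hx⟩)
  filter_upwards [hgx, Metric.ball_mem_nhds t₀ hδ] with t hgxt ht
  have hder : HasDerivAt (fun x => g t x - g t₀ x - x • (t - t₀) • c t₀ x₀)
      (gx t - gx t₀ - (1 : ℝ) • (t - t₀) • c t₀ x₀) x₀ :=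
    (hgxt.sub hgx.self_of_nhds).sub ((hasDerivAt_id x₀).smul_const _)
  rw [one_smul] at hder
  refine hder.le_of_lip' (by positivity) ?_
  filter_upwards [Metric.ball_mem_nhds x₀ hδ] with x hx
  convert norm_second_difference_sub_smul_le (convex_ball t₀ δ) (convex_ball x₀ δ)
    (fun t ht x hx => (hrect t ht x hx).1.1) (fun t ht x hx => (hrect t ht x hx).1.2)
    (fun t ht x hx => (hrect t ht x hx).2) (Metric.mem_ball_self hδ) ht
    (Metric.mem_ball_self hδ) hx using 1
  · congr 1
    module
  · ring

end Calculus

section Compactness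

lemma exists_forall_abs_lt_mul_of_isCompact {X : Type*} [TopologicalSpace X] {S : Set X}
    (hS : IsCompact S) {f φ : X → ℝ} (hf : ContinuousOn f S) (hφ : ContinuousOn φ S)
    (hpos : ∀ x ∈ S, 0 < φ x) : ∃ K, 0 < K ∧ ∀ x ∈ S, |f x| < K * φ x := by
  obtain ⟨C, hC⟩ := hS.exists_bound_of_continuousOn (hf.div hφ fun x hx => (hpos x hx).ne')
  refine ⟨max C 0 + 1, by positivity, fun x hx => ?_⟩
  rw [← div_lt_iff₀ (hpos x hx)]
  calc |f x| / φ x = ‖f x / φ x‖ := by rw [norm_div, norm_eq_abs, norm_of_nonneg (hpos x hx).le]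
    _ ≤ C := hC x hx
    _ < max C 0 + 1 := (le_max_left C 0).trans_lt (lt_add_one _)

lemma exists_first_zero_of_isCompact {X : Type*} [TopologicalSpace X] {S : Set X}
    (hS : IsCompact S) {f : ℝ → X → ℝ} (hf : Continuous (Function.uncurry f))
    (h0 : ∀ x ∈ S, 0 < f 0 x) {T : ℝ} (hT : 0 ≤ T) {y : X} (hy : y ∈ S) (hTy : f T y ≤ 0) :
    ∃ t₀ > 0, ∃ x₀ ∈ S, f t₀ x₀ = 0 ∧ ∀ t ∈ Icc 0 t₀, ∀ x ∈ S, 0 ≤ f t x := by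
  have hcomp : IsCompact ((Icc 0 T ×ˢ S) ∩ Function.uncurry f ⁻¹' Iic 0) :=
    (isCompact_Icc.prod hS).inter_right (isClosed_Iic.preimage hf)
  obtain ⟨⟨t₀, x₀⟩, ⟨⟨ht₀, hx₀⟩, hle⟩, hmin⟩ := hcomp.exists_isMinOn
    ⟨(T, y), ⟨⟨hT, le_rfl⟩, hy⟩, hTy⟩ continuous_fst.continuousOn
  have ht₀pos : 0 < t₀ := ht₀.1.lt_of_ne' fun h => (h0 x₀ hx₀).not_ge (h ▸ hle)
  have hbefore : ∀ t ∈ Ico 0 t₀, ∀ x ∈ S, 0 < f t x := by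
    intro t ht x hx
    by_contra! hfx
    exact ht.2.not_ge (hmin (a := (t, x)) ⟨⟨⟨ht.1, ht.2.le.trans ht₀.2⟩, hx⟩, hfx⟩)
  have hat : ∀ x ∈ S, 0 ≤ f t₀ x := by
    intro x hx
    have hcont : Continuous fun t => f t x := hf.comp (Continuous.prodMk_left x)
    refine ge_of_tendsto (hcont.continuousAt.mono_left (nhdsWithin_le_nhds (s := Iio t₀))) ?_
    filter_upwards [Ioo_mem_nhdsLT ht₀pos] with t ht using (hbefore t ⟨ht.1.le, ht.2⟩ x hx).le
  refine ⟨t₀, ht₀pos, x₀, hx₀, le_antisymm hle (hat x₀ hx₀), fun t ht x hx => ?_⟩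
  rcases ht.2.eq_or_lt with rfl | hlt
  · exact hat x hx
  · exact (hbefore t ⟨ht.1, hlt⟩ x hx).le

end Compactness

section Comparison

/-- Regularity of a pair `(u, R)` under which the system `u_t = σ u_xx - σ s u + R`,
`R_t = s u - R/σ` makes sense classically on `(0,∞) × (0,1)`, with continuity up to the boundary.
Continuity is asked on the whole plane, where the functions are defined. -/
structure IsRegularPair (u R : ℝ → ℝ → ℝ) : Prop where
  continuous_heat : Continuous (Function.uncurry u)
  continuous_memory : Continuous (Function.uncurry R)
  differentiableAt_heat : ∀ t > 0, ∀ x ∈ Ioo (0 : ℝ) 1, DifferentiableAt ℝ (fun τ => u τ x) t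
  differentiableAt_memory : ∀ t > 0, ∀ x ∈ Ioo (0 : ℝ) 1, DifferentiableAt ℝ (fun τ => R τ x) t
  contDiffAt_heat : ∀ t > 0, ∀ x ∈ Ioo (0 : ℝ) 1, ContDiffAt ℝ 2 (u t) x

/-- Classical solutions of the heat equation with memory `u_t = σ u_xx - σ s u + R`,
`R_t = s u - R/σ` on `(0,∞) × (0,1)`; the second equation makes `R` a convolution of `u(·,x)` with
an exponential kernel. -/
structure IsHeatMemorySolution (σ s : ℝ) (u R : ℝ → ℝ → ℝ) : Prop extends IsRegularPair u R where
  heat_eq : ∀ t > 0, ∀ x ∈ Ioo (0 : ℝ) 1, u_t u t x = σ * u_xx u t x - σ * s * u t x + R t x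
  memory_eq : ∀ t > 0, ∀ x ∈ Ioo (0 : ℝ) 1, u_t R t x = s * u t x - R t x / σ

/-- Strict supersolutions of the heat equation with memory. The source of the memory equation is
`|s| b` rather than `s b`, so that one supersolution dominates both `(u, R)` and `(-u, -R)` whatever
the sign of `s`. -/
structure IsStrictHeatMemorySupersolution (σ s : ℝ) (b Q : ℝ → ℝ → ℝ) : Prop
    extends IsRegularPair b Q where
  heat_lt : ∀ t > 0, ∀ x ∈ Ioo (0 : ℝ) 1, σ * u_xx b t x - σ * s * b t x + Q t x < u_t b t x
  memory_le : ∀ t > 0, ∀ x ∈ Ioo (0 : ℝ) 1, |s| * b t x - Q t x / σ ≤ u_t Q t x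

variable {σ s : ℝ} {u R b Q : ℝ → ℝ → ℝ}

lemma IsHeatMemorySolution.neg (hu : IsHeatMemorySolution σ s u R) :
    IsHeatMemorySolution σ s (fun t x => -u t x) (fun t x => -R t x) where
  continuous_heat := hu.continuous_heat.neg
  continuous_memory := hu.continuous_memory.neg
  differentiableAt_heat t ht x hx := (hu.differentiableAt_heat t ht x hx).neg
  differentiableAt_memory t ht x hx := (hu.differentiableAt_memory t ht x hx).neg
  contDiffAt_heat t ht x hx := (hu.contDiffAt_heat t ht x hx).neg
  heat_eq t ht x hx := by
    have hxx : u_xx (fun t x => -u t x) t x = -u_xx u t x := by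
      simp only [u_xx, deriv.fun_neg']
    have ht' : u_t (fun t x => -u t x) t x = -u_t u t x := deriv.fun_neg
    rw [hxx, ht', hu.heat_eq t ht x hx]
    ring
  memory_eq t ht x hx := by
    have ht' : u_t (fun t x => -R t x) t x = -u_t R t x := deriv.fun_neg
    rw [ht', hu.memory_eq t ht x hx]
    ring

lemma IsHeatMemorySolution.memory_le_of_abs_le (hu : IsHeatMemorySolution σ s u R)
    (hb : IsStrictHeatMemorySupersolution σ s b Q) {t₀ x : ℝ} (ht₀ : 0 ≤ t₀)
    (hx : x ∈ Ioo (0 : ℝ) 1) (hle : ∀ t ∈ Icc 0 t₀, |u t x| ≤ b t x) (h0 : R 0 x ≤ Q 0 x) :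
    R t₀ x ≤ Q t₀ x := by
  have hcont {f : ℝ → ℝ → ℝ} (hf : Continuous (Function.uncurry f)) :
      Continuous fun t => f t x := hf.comp (Continuous.prodMk_left x)
  refine sub_nonpos.1 (nonpos_of_deriv_le_mul (w := fun t => R t x - Q t x) (k := -σ⁻¹) ht₀
    ((hcont hu.continuous_memory).sub (hcont hb.continuous_memory)).continuousOn
    (fun t ht => (hu.differentiableAt_memory t ht.1 x hx).sub
      (hb.differentiableAt_memory t ht.1 x hx)) (fun t ht => ?_) (sub_nonpos.2 h0))
  have hsource : s * u t x ≤ |s| * b t x :=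
    calc s * u t x ≤ |s| * |u t x| := (le_abs_self _).trans (abs_mul _ _).le
      _ ≤ |s| * b t x := by gcongr; exact hle t (Ioo_subset_Icc_self ht)
  calc deriv (fun t => R t x - Q t x) t = u_t R t x - u_t Q t x :=
        deriv_fun_sub (hu.differentiableAt_memory t ht.1 x hx)
          (hb.differentiableAt_memory t ht.1 x hx)
    _ ≤ (s * u t x - R t x / σ) - (|s| * b t x - Q t x / σ) :=
        sub_le_sub (hu.memory_eq t ht.1 x hx).le (hb.memory_le t ht.1 x hx)
    _ ≤ -σ⁻¹ * (R t x - Q t x) := by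
        simp only [div_eq_mul_inv]
        linarith

lemma IsHeatMemorySolution.ne_of_abs_le (hu : IsHeatMemorySolution σ s u R)
    (hb : IsStrictHeatMemorySupersolution σ s b Q) (hσ : 0 ≤ σ) {t₀ x₀ : ℝ} (ht₀ : 0 < t₀)
    (hx₀ : x₀ ∈ Ioo (0 : ℝ) 1) (hle : ∀ t ∈ Icc 0 t₀, ∀ x ∈ Icc (0 : ℝ) 1, |u t x| ≤ b t x)
    (h0 : R 0 x₀ ≤ Q 0 x₀) : u t₀ x₀ ≠ b t₀ x₀ := by
  intro heq
  have hx₀' : x₀ ∈ Icc (0 : ℝ) 1 := Ioo_subset_Icc_self hx₀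
  have hmemory : R t₀ x₀ ≤ Q t₀ x₀ :=
    hu.memory_le_of_abs_le hb ht₀.le hx₀ (fun t ht => hle t ht x₀ hx₀') h0
  have htime : u_t b t₀ x₀ ≤ u_t u t₀ x₀ := by
    refine deriv_le_deriv_of_eventually_le_left (hu.differentiableAt_heat t₀ ht₀ x₀ hx₀)
      (hb.differentiableAt_heat t₀ ht₀ x₀ hx₀) ?_ heq
    filter_upwards [Ioo_mem_nhdsLT ht₀] with t ht
    exact (le_abs_self _).trans (hle t (Ioo_subset_Icc_self ht) x₀ hx₀')
  have hspace : u_xx u t₀ x₀ ≤ u_xx b t₀ x₀ := by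
    refine deriv_deriv_le_of_eventually_le (hu.contDiffAt_heat t₀ ht₀ x₀ hx₀)
      (hb.contDiffAt_heat t₀ ht₀ x₀ hx₀) ?_ heq
    filter_upwards [Icc_mem_nhds hx₀.1 hx₀.2] with x hx
    exact (le_abs_self _).trans (hle t₀ (right_mem_Icc.2 ht₀.le) x hx)
  refine lt_irrefl (u_t u t₀ x₀) ?_
  calc u_t u t₀ x₀ = σ * u_xx u t₀ x₀ - σ * s * u t₀ x₀ + R t₀ x₀ := hu.heat_eq t₀ ht₀ x₀ hx₀
    _ ≤ σ * u_xx b t₀ x₀ - σ * s * b t₀ x₀ + Q t₀ x₀ := by rw [heq]; gcongr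
    _ < u_t b t₀ x₀ := hb.heat_lt t₀ ht₀ x₀ hx₀
    _ ≤ u_t u t₀ x₀ := htime

theorem IsHeatMemorySolution.abs_lt_of_supersolution (hu : IsHeatMemorySolution σ s u R)
    (hb : IsStrictHeatMemorySupersolution σ s b Q) (hσ : 0 ≤ σ)
    (hu0 : ∀ x ∈ Icc (0 : ℝ) 1, |u 0 x| < b 0 x) (hR0 : ∀ x ∈ Icc (0 : ℝ) 1, |R 0 x| ≤ Q 0 x)
    (hleft : ∀ t ≥ 0, |u t 0| < b t 0) (hright : ∀ t ≥ 0, |u t 1| < b t 1) :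
    ∀ t ≥ 0, ∀ x ∈ Icc (0 : ℝ) 1, |u t x| < b t x := by
  intro T hT y hy
  by_contra! hTy
  obtain ⟨t₀, ht₀, x₀, hx₀, hzero, hnonneg⟩ := exists_first_zero_of_isCompact isCompact_Icc
    (f := fun t x => b t x - |u t x|) (hb.continuous_heat.sub hu.continuous_heat.abs)
    (fun x hx => sub_pos.2 (hu0 x hx)) hT hy (sub_nonpos.2 hTy)
  have htouch : |u t₀ x₀| = b t₀ x₀ := (sub_eq_zero.1 hzero).symm
  have hle : ∀ t ∈ Icc 0 t₀, ∀ x ∈ Icc (0 : ℝ) 1, |u t x| ≤ b t x :=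
    fun t ht x hx => sub_nonneg.1 (hnonneg t ht x hx)
  have hx₀' : x₀ ∈ Ioo (0 : ℝ) 1 :=
    ⟨hx₀.1.lt_of_ne (by rintro rfl; exact (hleft t₀ ht₀.le).ne htouch),
      hx₀.2.lt_of_ne (by rintro rfl; exact (hright t₀ ht₀.le).ne htouch)⟩
  rcases abs_choice (u t₀ x₀) with hpos | hneg
  · exact hu.ne_of_abs_le hb hσ ht₀ hx₀' hle ((le_abs_self _).trans (hR0 x₀ hx₀))
      (hpos.symm.trans htouch)
  · exact hu.neg.ne_of_abs_le hb hσ ht₀ hx₀' (by simpa only [abs_neg] using hle)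
      ((neg_le_abs _).trans (hR0 x₀ hx₀)) (hneg.symm.trans htouch)

end Comparison

section Barrier

/-- The barrier `sin(θ + ax) (A + K e^{-εt})`: a positive concave profile in space times a level
relaxing exponentially to `A`. Both components of the supersolution are of this form. -/
def barrier (a θ ε A K t x : ℝ) : ℝ := sin (θ + a * x) * (A + K * exp (-(ε * t)))

lemma contDiff_barrier (a θ ε A K : ℝ) {n : WithTop ℕ∞} :
    ContDiff ℝ n (Function.uncurry (barrier a θ ε A K)) := by
  unfold Function.uncurry barrier
  fun_prop

lemma u_t_barrier (a θ ε A K t x : ℝ) :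
    u_t (barrier a θ ε A K) t x = barrier a θ ε 0 (-(ε * K)) t x := by
  have hexp : HasDerivAt (fun τ => exp (-(ε * τ))) (exp (-(ε * t)) * -(ε * 1)) t :=
    ((hasDerivAt_id t).const_mul ε).neg.exp
  refine (((hexp.const_mul K).const_add A).const_mul (sin (θ + a * x))).deriv.trans ?_
  rw [barrier]
  ring

lemma u_xx_barrier (a θ ε A K t x : ℝ) :
    u_xx (barrier a θ ε A K) t x = -a ^ 2 * barrier a θ ε A K t x := by
  have hlin (y : ℝ) : HasDerivAt (fun y => θ + a * y) a y := by
    simpa using ((hasDerivAt_id y).const_mul a).const_add θ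
  have hx : deriv (fun y => barrier a θ ε A K t y) =
      fun y => cos (θ + a * y) * a * (A + K * exp (-(ε * t))) :=
    funext fun y => ((hlin y).sin.mul_const _).deriv
  rw [u_xx, hx, (((hlin x).cos.mul_const a).mul_const _).deriv, barrier]
  ring

variable {σ s a θ ε κ A K : ℝ}

lemma sin_add_mul_pos (hθ : 0 < θ) (ha : 0 ≤ a) (haθ : θ + a < π) {x : ℝ}
    (hx : x ∈ Icc (0 : ℝ) 1) : 0 < sin (θ + a * x) :=
  sin_pos_of_pos_of_lt_pi (by linarith [mul_nonneg ha hx.1])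
    (by linarith [mul_le_of_le_one_right ha hx.2])

lemma isStrictHeatMemorySupersolution_barrier (hσ : 0 < σ) (hθ : 0 < θ) (ha : 0 ≤ a)
    (haθ : θ + a < π) (hs : |s| ≤ a ^ 2 + s) (hA : 0 ≤ A) (hK : 0 < K)
    (hε : ε < σ * (a ^ 2 + s) - κ) (hκ : σ * |s| ≤ κ * (1 - ε * σ)) :
    IsStrictHeatMemorySupersolution σ s (barrier a θ ε A K)
      (barrier a θ ε (σ * |s| * A) (κ * K)) where
  continuous_heat := (contDiff_barrier a θ ε _ _ (n := 0)).continuous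
  continuous_memory := (contDiff_barrier a θ ε _ _ (n := 0)).continuous
  differentiableAt_heat t _ x _ := by unfold barrier; fun_prop
  differentiableAt_memory t _ x _ := by unfold barrier; fun_prop
  contDiffAt_heat t _ x _ := by unfold barrier; fun_prop
  heat_lt t _ x hx := by
    have hsin := sin_add_mul_pos hθ ha haθ (Ioo_subset_Icc_self hx)
    have hsteady : 0 ≤ sin (θ + a * x) * (σ * (a ^ 2 + s - |s|) * A) := by
      have := sub_nonneg.2 hs
      positivity
    have htransient : 0 < sin (θ + a * x) *
        ((σ * (a ^ 2 + s) - κ - ε) * (K * exp (-(ε * t)))) := by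
      have := sub_pos.2 hε
      positivity
    rw [u_t_barrier, u_xx_barrier]
    unfold barrier
    linarith
  memory_le t _ x hx := by
    have hsin := sin_add_mul_pos hθ ha haθ (Ioo_subset_Icc_self hx)
    have hgap : 0 ≤ sin (θ + a * x) * ((κ * (1 - ε * σ) - σ * |s|) * (K * exp (-(ε * t)))) := by
      have := sub_nonneg.2 hκ
      positivity
    rw [u_t_barrier, sub_le_iff_le_add, ← sub_le_iff_le_add', le_div_iff₀ hσ]
    unfold barrier
    linarith

lemma exists_barrier_rates (hσ : 0 < σ) (hs : |s| < a ^ 2 + s) :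
    ∃ κ > 0, ∃ ε > 0, ε < σ * (a ^ 2 + s) - κ ∧ σ * |s| ≤ κ * (1 - ε * σ) := by
  obtain ⟨κ, hκs, hκa⟩ := exists_between (mul_lt_mul_of_pos_left hs hσ)
  have hκ : 0 < κ := (by positivity : 0 ≤ σ * |s|).trans_lt hκs
  obtain ⟨ε, hε, hgap⟩ := exists_pos_mul_lt
    (lt_min (sub_pos.2 hκa) (sub_pos.2 hκs)) (1 + κ * σ)
  obtain ⟨hgap₁, hgap₂⟩ := lt_min_iff.1 hgap
  have hκσε : 0 < κ * σ * ε := by positivity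
  exact ⟨κ, hκ, ε, hε, by linarith, by linarith⟩

theorem IsHeatMemorySolution.exists_abs_lt_barrier {u R : ℝ → ℝ → ℝ} {D : ℝ}
    (hu : IsHeatMemorySolution σ s u R) (hσ : 0 < σ) (hθ : 0 < θ) (ha : 0 ≤ a)
    (haθ : θ + a < π) (hs : |s| < a ^ 2 + s) (hleft : ∀ t ≥ 0, |u t 0| ≤ D)
    (hright : ∀ t ≥ 0, u t 1 = 0) :
    ∃ ε > 0, ∃ K > 0, ∀ t ≥ 0, ∀ x ∈ Icc (0 : ℝ) 1,
      |u t x| < barrier a θ ε (D / sin θ) K t x := by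
  obtain ⟨κ, hκ, ε, hε, hεκ, hκs⟩ := exists_barrier_rates hσ hs
  have hsin (x : ℝ) (hx : x ∈ Icc (0 : ℝ) 1) : 0 < sin (θ + a * x) := sin_add_mul_pos hθ ha haθ hx
  have hsinθ : 0 < sin θ := by simpa using hsin 0 (by simp)
  have hA : 0 ≤ D / sin θ := div_nonneg ((abs_nonneg _).trans (hleft 0 le_rfl)) hsinθ.le
  have hcont {f : ℝ → ℝ → ℝ} (hf : Continuous (Function.uncurry f)) : Continuous (f 0) :=
    hf.comp (Continuous.prodMk_right 0)
  obtain ⟨K, hK, hinit⟩ := exists_forall_abs_lt_mul_of_isCompact isCompact_Icc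
    (f := fun x => |u 0 x| + |R 0 x| / κ)
    ((hcont hu.continuous_heat).abs.add ((hcont hu.continuous_memory).abs.div_const κ)).continuousOn
    (by fun_prop) hsin
  have hinit' (x : ℝ) (hx : x ∈ Icc (0 : ℝ) 1) :
      |u 0 x| + |R 0 x| / κ < K * sin (θ + a * x) := (le_abs_self _).trans_lt (hinit x hx)
  refine ⟨ε, hε, K, hK, hu.abs_lt_of_supersolution
    (isStrictHeatMemorySupersolution_barrier hσ hθ ha haθ hs.le hA hK hεκ hκs) hσ.le
    (fun x hx => ?_) (fun x hx => ?_) (fun t ht => ?_) (fun t ht => ?_)⟩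
  · have hsteady : 0 ≤ sin (θ + a * x) * (D / sin θ) := mul_nonneg (hsin x hx).le hA
    have hR : 0 ≤ |R 0 x| / κ := by positivity
    simp only [barrier, mul_zero, neg_zero, exp_zero, mul_one]
    linarith [hinit' x hx]
  · have hsteady : 0 ≤ sin (θ + a * x) * (σ * |s| * (D / sin θ)) :=
      mul_nonneg (hsin x hx).le (by positivity)
    have hR : |R 0 x| / κ < K * sin (θ + a * x) := by linarith [hinit' x hx, abs_nonneg (u 0 x)]
    rw [div_lt_iff₀ hκ] at hR
    simp only [barrier, mul_zero, neg_zero, exp_zero, mul_one]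
    linarith
  · calc |u t 0| ≤ sin θ * (D / sin θ) := by
          rw [mul_div_cancel₀ D hsinθ.ne']; exact hleft t ht
      _ < barrier a θ ε (D / sin θ) K t 0 := by
          simp only [barrier, mul_zero, add_zero]
          gcongr
          exact lt_add_of_pos_right _ (by positivity)
  · rw [hright t ht, abs_zero]
    exact mul_pos (hsin 1 (by simp)) (by positivity)

end Barrier

section WaveEquation

/-- Space derivative `∂u/∂x`, so that `u_xx u = u_x (u_x u)` and `u_txx u = u_x (u_x (u_t u))`. -/
def u_x (u : ℝ → ℝ → ℝ) (t x : ℝ) : ℝ := deriv (u t) x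

variable {u : ℝ → ℝ → ℝ}

lemma hasDerivAt_fderiv_time (hu : Differentiable ℝ (Function.uncurry u)) (t x : ℝ) :
    HasDerivAt (fun τ => u τ x) (fderiv ℝ (Function.uncurry u) (t, x) (1, 0)) t := by
  have hu' := (hu (t, x)).hasFDerivAt
  exact hu'.comp_hasDerivAt t ((hasDerivAt_id t).prodMk (hasDerivAt_const t x))

lemma hasDerivAt_fderiv_space (hu : Differentiable ℝ (Function.uncurry u)) (t x : ℝ) :
    HasDerivAt (u t) (fderiv ℝ (Function.uncurry u) (t, x) (0, 1)) x := by
  have hu' := (hu (t, x)).hasFDerivAt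
  exact hu'.comp_hasDerivAt x ((hasDerivAt_const x t).prodMk (hasDerivAt_id x))

lemma hasDerivAt_u_t (hu : Differentiable ℝ (Function.uncurry u)) (t x : ℝ) :
    HasDerivAt (fun τ => u τ x) (u_t u t x) t :=
  (hasDerivAt_fderiv_time hu t x).differentiableAt.hasDerivAt

lemma hasDerivAt_u_x (hu : Differentiable ℝ (Function.uncurry u)) (t x : ℝ) :
    HasDerivAt (u t) (u_x u t x) x :=
  (hasDerivAt_fderiv_space hu t x).differentiableAt.hasDerivAt

lemma contDiff_uncurry_u_t {n : WithTop ℕ∞} (hu : ContDiff ℝ (n + 1) (Function.uncurry u)) :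
    ContDiff ℝ n (Function.uncurry (u_t u)) := by
  have heq : Function.uncurry (u_t u) = fun z => fderiv ℝ (Function.uncurry u) z (1, 0) :=
    funext fun z => (hasDerivAt_fderiv_time (hu.differentiable (by simp)) z.1 z.2).deriv
  rw [heq]
  exact (hu.fderiv_right le_rfl).clm_apply contDiff_const

lemma contDiff_uncurry_u_x {n : WithTop ℕ∞} (hu : ContDiff ℝ (n + 1) (Function.uncurry u)) :
    ContDiff ℝ n (Function.uncurry (u_x u)) := by
  have heq : Function.uncurry (u_x u) = fun z => fderiv ℝ (Function.uncurry u) z (0, 1) :=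
    funext fun z => (hasDerivAt_fderiv_space (hu.differentiable (by simp)) z.1 z.2).deriv
  rw [heq]
  exact (hu.fderiv_right le_rfl).clm_apply contDiff_const

lemma hasDerivAt_u_x_time (hu : ContDiff ℝ 2 (Function.uncurry u)) (t x : ℝ) :
    HasDerivAt (fun τ => u_x u τ x) (u_x (u_t u) t x) t := by
  have hu_t : ContDiff ℝ 1 (Function.uncurry (u_t u)) := contDiff_uncurry_u_t hu
  exact hasDerivAt_of_mixed_partial_continuousAt
    (.of_forall fun τ => hasDerivAt_u_x (hu.differentiable (by simp)) τ x)
    (.of_forall fun z => hasDerivAt_u_t (hu.differentiable (by simp)) z.1 z.2)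
    (.of_forall fun z => hasDerivAt_u_x (hu_t.differentiable (by simp)) z.1 z.2)
    (contDiff_uncurry_u_x (n := 0) hu_t).continuous.continuousAt

/-- The variable `R = u_t - σ u_xx + σ s u` that turns the damped wave equation into a heat
equation with memory. -/
def memory (σ s : ℝ) (u : ℝ → ℝ → ℝ) (t x : ℝ) : ℝ :=
  u_t u t x - σ * u_xx u t x + σ * s * u t x

namespace IsClassicalSolution

variable {σ μ : ℝ} {d : ℝ → ℝ}

lemma continuousAt_u_txx (hu : IsClassicalSolution σ μ d u) (hσ : σ ≠ 0) {t x : ℝ} (ht : 0 < t)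
    (hx : x ∈ Ioo (0 : ℝ) 1) : ContinuousAt (Function.uncurry (u_txx u)) (t, x) := by
  have hu_t : ContDiff ℝ 1 (Function.uncurry (u_t u)) := contDiff_uncurry_u_t hu.1
  have hu_x : ContDiff ℝ 1 (Function.uncurry (u_x u)) := contDiff_uncurry_u_x hu.1
  have hu_tt : Continuous (Function.uncurry (u_tt u)) :=
    (contDiff_uncurry_u_t (n := 0) hu_t).continuous
  have hu_xx : Continuous (Function.uncurry (u_xx u)) :=
    (contDiff_uncurry_u_x (n := 0) hu_x).continuous
  have hcont : Continuous fun z : ℝ × ℝ =>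
      (u_tt u z.1 z.2 - u_xx u z.1 z.2 + μ * u_t u z.1 z.2) / σ :=
    ((hu_tt.sub hu_xx).add (continuous_const.mul hu_t.continuous)).div_const σ
  refine hcont.continuousAt.congr ?_
  filter_upwards [prod_mem_nhds (Ioi_mem_nhds ht) (Ioo_mem_nhds hx.1 hx.2)] with z hz
  rw [hu.2.2.1 z.1 z.2 (le_of_lt hz.1) (Ioo_subset_Icc_self hz.2), div_eq_iff hσ,
    Function.uncurry_def]
  ring

lemma hasDerivAt_u_xx_time (hu : IsClassicalSolution σ μ d u) (hσ : σ ≠ 0) {t x : ℝ} (ht : 0 < t)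
    (hx : x ∈ Ioo (0 : ℝ) 1) : HasDerivAt (fun τ => u_xx u τ x) (u_txx u t x) t := by
  have hu_x : ContDiff ℝ 1 (Function.uncurry (u_x u)) := contDiff_uncurry_u_x hu.1
  refine hasDerivAt_of_mixed_partial_continuousAt
    (.of_forall fun τ => hasDerivAt_u_x (hu_x.differentiable (by simp)) τ x)
    (.of_forall fun z => hasDerivAt_u_x_time hu.1 z.1 z.2) ?_ (hu.continuousAt_u_txx hσ ht hx)
  filter_upwards [prod_mem_nhds (Ioi_mem_nhds ht) univ_mem] with z hz
  exact ((hu.2.1 z.1 (le_of_lt hz.1)).differentiable_deriv_two z.2).hasDerivAt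

theorem isHeatMemorySolution (hu : IsClassicalSolution σ μ d u) (hσ : σ ≠ 0) :
    IsHeatMemorySolution σ ((μ * σ - 1) / σ ^ 2) u (memory σ ((μ * σ - 1) / σ ^ 2) u) := by
  have hu_t : ContDiff ℝ 1 (Function.uncurry (u_t u)) := contDiff_uncurry_u_t hu.1
  have hu_x : ContDiff ℝ 1 (Function.uncurry (u_x u)) := contDiff_uncurry_u_x hu.1
  have hu_xx : Continuous (Function.uncurry (u_xx u)) :=
    (contDiff_uncurry_u_x (n := 0) hu_x).continuous
  have hdiff : Differentiable ℝ (Function.uncurry u) := hu.1.differentiable (by simp)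
  set s := (μ * σ - 1) / σ ^ 2 with hs
  have hmemory (t : ℝ) (ht : 0 < t) (x : ℝ) (hx : x ∈ Ioo (0 : ℝ) 1) :
      HasDerivAt (fun τ => memory σ s u τ x)
        (u_tt u t x - σ * u_txx u t x + σ * s * u_t u t x) t :=
    ((hasDerivAt_u_t (hu_t.differentiable (by simp)) t x).sub
      ((hu.hasDerivAt_u_xx_time hσ ht hx).const_mul σ)).add
        ((hasDerivAt_u_t hdiff t x).const_mul (σ * s))
  exact
    { continuous_heat := hu.1.continuous
      continuous_memory := (hu_t.continuous.sub (continuous_const.mul hu_xx)).add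
        (continuous_const.mul hu.1.continuous)
      differentiableAt_heat := fun t _ x _ => (hasDerivAt_u_t hdiff t x).differentiableAt
      differentiableAt_memory := fun t ht x hx => (hmemory t ht x hx).differentiableAt
      contDiffAt_heat := fun t _ x _ => (hu.1.comp (contDiff_prodMk_right t)).contDiffAt
      heat_eq := fun t _ x _ => by rw [memory]; ring
      memory_eq := fun t ht x hx => by
        rw [u_t, (hmemory t ht x hx).deriv, hu.2.2.1 t x ht.le (Ioo_subset_Icc_self hx), memory, hs]
        field_simp
        ring }

end IsClassicalSolution

end WaveEquation

section AsymptoticGain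

variable {s θ D : ℝ} {d : ℝ → ℝ} {u : ℝ → ℝ → ℝ}

lemma supNorm_nonneg (u : ℝ → ℝ → ℝ) (t : ℝ) : 0 ≤ supNorm u t :=
  Real.sSup_nonneg (by rintro _ ⟨x, -, rfl⟩; exact abs_nonneg _)

lemma supNorm_le {t C : ℝ} (h : ∀ x ∈ Icc (0 : ℝ) 1, |u t x| ≤ C) : supNorm u t ≤ C :=
  csSup_le ⟨_, 0, by simp, rfl⟩ (by rintro _ ⟨x, hx, rfl⟩; exact h x hx)

lemma supD_nonneg (d : ℝ → ℝ) : 0 ≤ supD d :=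
  Real.sSup_nonneg (by rintro _ ⟨t, -, rfl⟩; exact abs_nonneg _)

lemma BddC2.abs_le_supD (hd : BddC2 d) {t : ℝ} (ht : 0 ≤ t) : |d t| ≤ supD d := by
  obtain ⟨-, M, hM⟩ := hd
  exact le_csSup ⟨M, by rintro _ ⟨r, hr, rfl⟩; exact hM r hr⟩ ⟨t, ht, rfl⟩

lemma limsup_supNorm_le_of_tendsto {f : ℝ → ℝ} {L : ℝ}
    (hle : ∀ t ≥ 0, ∀ x ∈ Icc (0 : ℝ) 1, |u t x| ≤ f t) (hf : Tendsto f atTop (nhds L)) :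
    limsup (fun t => supNorm u t) atTop ≤ L := by
  rw [← hf.limsup_eq]
  refine limsup_le_limsup ?_ ?_ hf.isBoundedUnder_le
  · filter_upwards [eventually_ge_atTop 0] with t ht using supNorm_le (hle t ht)
  · exact (isBoundedUnder_of ⟨0, supNorm_nonneg u⟩ :
      IsBoundedUnder (· ≥ ·) atTop fun t => supNorm u t).isCoboundedUnder_le

lemma sqrt_abs_sub_self_lt {r : ℝ} (hr : 0 < r) (h : 0 < r ^ 2 + 2 * s) : √(|s| - s) < r := by
  rw [Real.sqrt_lt' hr, sub_lt_iff_lt_add, abs_lt]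
  constructor <;> nlinarith

lemma sqrt_abs_sub_self_lt_pi {σ μ : ℝ} (hσ : 0 < σ) (h : 2 < 2 * μ * σ + σ ^ 2 * π ^ 2) :
    √(|(μ * σ - 1) / σ ^ 2| - (μ * σ - 1) / σ ^ 2) < π := by
  refine sqrt_abs_sub_self_lt pi_pos ?_
  calc 0 < (2 * μ * σ + σ ^ 2 * π ^ 2 - 2) / σ ^ 2 := div_pos (sub_pos.2 h) (by positivity)
    _ = π ^ 2 + 2 * ((μ * σ - 1) / σ ^ 2) := by
      field_simp
      ring

lemma abs_lt_sq_add_of_sqrt_lt {r : ℝ} (hr : √(|s| - s) < r) : |s| < r ^ 2 + s :=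
  sub_lt_iff_lt_add.1 ((Real.sqrt_lt' ((Real.sqrt_nonneg _).trans_lt hr)).1 hr)

lemma pfun_nonneg (hθ : √(|s| - s) < π - θ) : 0 ≤ pfun s θ :=
  div_nonneg (abs_nonneg s) (by linarith [abs_lt_sq_add_of_sqrt_lt hθ, abs_nonneg s])

lemma pfun_lt_one (hθ : √(|s| - s) < π - θ) : pfun s θ < 1 := by
  have hlt := abs_lt_sq_add_of_sqrt_lt hθ
  exact (div_lt_one (by linarith [abs_nonneg s])).2 (by linarith)

lemma le_gfun_mul {L : ℝ} (hs : √(|s| - s) < π) (hD : 0 ≤ D)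
    (h : ∀ θ, 0 < θ → θ < π - √(|s| - s) → L ≤ D / sin θ) : L ≤ gfun s * D := by
  have hbound (θ : ℝ) (hθ : 0 < θ) (hθ' : θ < π - √(|s| - s)) :
      L ≤ 1 / (sin θ * (1 - pfun s θ)) * D := by
    have hlt : √(|s| - s) < π - θ := by linarith
    have hsin : 0 < sin θ := sin_pos_of_pos_of_lt_pi hθ (by linarith [Real.sqrt_nonneg (|s| - s)])
    have hp : 0 < 1 - pfun s θ := sub_pos.2 (pfun_lt_one hlt)
    calc L ≤ 1 / sin θ * D := (h θ hθ hθ').trans_eq (by ring)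
      _ ≤ 1 / (sin θ * (1 - pfun s θ)) * D := by
        gcongr
        exact mul_le_of_le_one_right hsin.le (sub_le_self 1 (pfun_nonneg hlt))
  obtain ⟨θ₀, hθ₀, hθ₀'⟩ := exists_between (sub_pos.2 hs)
  rcases hD.eq_or_lt with rfl | hpos
  · simpa only [mul_zero] using hbound θ₀ hθ₀ hθ₀'
  · rw [← div_le_iff₀ hpos]
    refine le_csInf ⟨_, θ₀, hθ₀, hθ₀', rfl⟩ ?_
    rintro _ ⟨θ, hθ, hθ', rfl⟩
    exact (div_le_iff₀ hpos).2 (hbound θ hθ hθ')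

theorem asymptotic_gain_sup_upper_bound_general {σ μ : ℝ} (hσ : 0 < σ)
    (hu : IsClassicalSolution σ μ d u) (hd : ∀ t ≥ 0, |d t| ≤ D) (hθ : 0 < θ)
    (hθ' : θ < π - √(|(μ * σ - 1) / σ ^ 2| - (μ * σ - 1) / σ ^ 2)) :
    limsup (fun t => supNorm u t) atTop ≤ D / sin θ := by
  -- strictness on both sides keeps `sin(θ + ax)` positive and the supersolution strict
  obtain ⟨a, hsa, haθ⟩ := exists_between (lt_sub_comm.1 hθ')
  have ha : 0 ≤ a := (Real.sqrt_nonneg _).trans hsa.le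
  obtain ⟨ε, hε, K, hK, hbarrier⟩ := (hu.isHeatMemorySolution hσ.ne').exists_abs_lt_barrier hσ hθ ha
    (lt_sub_iff_add_lt'.1 haθ) (abs_lt_sq_add_of_sqrt_lt hsa)
    (fun t ht => by rw [(hu.2.2.2 t ht).1]; exact hd t ht) (fun t ht => (hu.2.2.2 t ht).2)
  have hsin : 0 < sin θ := sin_pos_of_pos_of_lt_pi hθ (by linarith)
  have hD : 0 ≤ D := (abs_nonneg _).trans (hd 0 le_rfl)
  refine limsup_supNorm_le_of_tendsto (f := fun t => D / sin θ + K * exp (-(ε * t)))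
    (fun t ht x hx => (hbarrier t ht x hx).le.trans
      (mul_le_of_le_one_left (by positivity) (sin_le_one _))) ?_
  have hexp : Tendsto (fun t => exp (-(ε * t))) atTop (nhds 0) :=
    tendsto_exp_neg_atTop_nhds_zero.comp (tendsto_id.const_mul_atTop hε)
  simpa using (hexp.const_mul K).const_add (D / sin θ)

end AsymptoticGain

/-- upper bound `g((μσ−1)/σ²)` for the asymptotic gain in the spatial
sup norm, under the condition `2 < 2μσ + σ²π²`. -/
theorem asymptotic_gain_sup_upper_bound
    (σ μ : ℝ) (hσ : 0 < σ) (hμ : 0 ≤ μ) (hcond : 2 < 2 * μ * σ + σ ^ 2 * π ^ 2)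
    (d : ℝ → ℝ) (hd : BddC2 d)
    (u : ℝ → ℝ → ℝ) (hu : IsClassicalSolution σ μ d u) :
    Filter.limsup (fun t => supNorm u t) Filter.atTop ≤
      gfun ((μ * σ - 1) / σ ^ 2) * supD d := by
  exact le_gfun_mul (sqrt_abs_sub_self_lt_pi hσ hcond) (supD_nonneg d) fun _ hθ hθ' =>
    asymptotic_gain_sup_upper_bound_general hσ hu (fun _ ht => hd.abs_le_supD ht) hθ hθ'
end
end

section
/- Let σ > 0 and μ ≥ 0 be constants. For each ω > 0 define r := ω√((μσ−1)²ω² + (μ+σω²)²)/(1+σ²ω²), let θ ∈ (0,π) be the unique angle with cos(θ) = (μσ−1)ω²/((1+σ²ω²)r) and sin(θ) = (μ+σω²)ω/((1+σ²ω²)r), and set a := √r·cos(θ/2), b := √r·sin(θ/2). Suppose γ ≥ 0 is a constant such that for every bounded d ∈ C²([0,∞);ℝ) and every classical solution u of the damped wave system with boundary input d one has limsup_{t→+∞} ( max_{x∈[0,1]} |u(t,x)| ) ≤ γ · sup_{t≥0} |d(t)|. Then γ ≥ sup_{ω>0} √( max_{x∈[0,1]} (cosh(2ax) − cos(2bx))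 / (cosh(2a) − cos(2b)) ). -/
/-! The bound is forced by time-harmonic solutions. The wave `Re (e^{iωt} f(x))` solves the
equation when its profile satisfies `(1 + iσω) f'' = (-ω² + iμω) f`, and the profile
`f(x) = sinh (k (1 - x))`, which vanishes at `x = 1`, does so when
`k² = (-ω² + iμω) / (1 + iσω)`. The numbers `r` and `θ` are the modulus and the argument of this
quotient, so `k = a + ib` is its square root. At each point `x` the wave returns to its amplitude
`‖f(x)‖` at arbitrarily large times, while the boundary input never exceeds `‖f(0)‖`; hence
`‖sinh (k (1 - x))‖ ≤ γ ‖sinh k‖`, and the claim follows from the identity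
`2 ‖sinh (kx)‖² = cosh (2ax) - cos (2bx)`. -/

open Real Filter MeasureTheory intervalIntegral Set

noncomputable section

/-- `r := ω√((μσ−1)²ω² + (μ+σω²)²)/(1+σ²ω²)`. -/
def rfreq (σ μ ω : ℝ) : ℝ :=
  ω * Real.sqrt ((μ * σ - 1) ^ 2 * ω ^ 2 + (μ + σ * ω ^ 2) ^ 2) / (1 + σ ^ 2 * ω ^ 2)

/-- The unique angle `θ ∈ (0,π)` with `cos(θ) = (μσ−1)ω²/((1+σ²ω²)r)` and
`sin(θ) = (μ+σω²)ω/((1+σ²ω²)r)`; since the sine is positive it is given by `arccos`. -/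
def θfreq (σ μ ω : ℝ) : ℝ :=
  Real.arccos ((μ * σ - 1) * ω ^ 2 / ((1 + σ ^ 2 * ω ^ 2) * rfreq σ μ ω))

/-- `a := √r·cos(θ/2)`. -/
def afreq (σ μ ω : ℝ) : ℝ := Real.sqrt (rfreq σ μ ω) * Real.cos (θfreq σ μ ω / 2)

/-- `b := √r·sin(θ/2)`. -/
def bfreq (σ μ ω : ℝ) : ℝ := Real.sqrt (rfreq σ μ ω) * Real.sin (θfreq σ μ ω / 2)

lemma two_mul_norm_sinh_sq (z : ℂ) :
    2 * ‖Complex.sinh z‖ ^ 2 = Real.cosh (2 * z.re) - Real.cos (2 * z.im) := by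
  have hsq : ‖Complex.sinh z‖ ^ 2
      = (Real.sinh z.re * Real.cos z.im) ^ 2 + (Real.cosh z.re * Real.sin z.im) ^ 2 := by
    rw [← Complex.normSq_add_mul_I, ← Complex.sq_norm]
    nth_rw 1 [← Complex.re_add_im z]
    rw [Complex.sinh_add, Complex.sinh_mul_I, Complex.cosh_mul_I]
    push_cast
    ring_nf
  rw [hsq, Real.cosh_two_mul, Real.cos_two_mul]
  linear_combination (2 * Real.cosh z.re ^ 2) * Real.sin_sq z.im
    + (1 - 2 * Real.cos z.im ^ 2) * Real.cosh_sq z.re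

section HarmonicWave

/-- The time-harmonic wave `Re (e^{iωt} f(x))` of frequency `ω` and complex profile `f`, the ansatz
that turns the damped wave equation into an ordinary differential equation for `f`. -/
def harmonicWave (ω : ℝ) (f : ℝ → ℂ) (t x : ℝ) : ℝ :=
  (Complex.exp ((ω * t : ℝ) * Complex.I) * f x).re

variable {ω : ℝ} {f f' f'' : ℝ → ℂ}

lemma abs_harmonicWave_le (ω : ℝ) (f : ℝ → ℂ) (t x : ℝ) : |harmonicWave ω f t x| ≤ ‖f x‖ := by
  simpa only [harmonicWave, norm_mul, Complex.norm_exp_ofReal_mul_I, one_mul]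
    using Complex.abs_re_le_norm (Complex.exp ((ω * t : ℝ) * Complex.I) * f x)

lemma contDiff_harmonicWave {n : WithTop ℕ∞} (hf : ContDiff ℝ n f) :
    ContDiff ℝ n (Function.uncurry (harmonicWave ω f)) := by
  have hphase : ContDiff ℝ n fun p : ℝ × ℝ => ((ω * p.1 : ℝ) : ℂ) * Complex.I :=
    (Complex.ofRealCLM.contDiff.comp (contDiff_const.mul contDiff_fst)).mul contDiff_const
  exact Complex.reCLM.contDiff.comp (hphase.cexp.mul (hf.comp contDiff_snd))

lemma u_t_harmonicWave (ω : ℝ) (f : ℝ → ℂ) :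
    u_t (harmonicWave ω f) = harmonicWave ω ((Complex.I * ω) • f) := by
  funext t x
  have hphase : HasDerivAt (fun τ : ℝ => ((ω * τ : ℝ) : ℂ) * Complex.I) (ω * Complex.I) t := by
    simpa using (((hasDerivAt_id t).const_mul ω).ofReal_comp).mul_const Complex.I
  have hwave := (hphase.cexp.mul_const (f x)).congr_deriv (g' :=
    Complex.exp ((ω * t : ℝ) * Complex.I) * ((Complex.I * ω) • f) x)
    (by rw [Pi.smul_apply, smul_eq_mul]; ring)
  exact (Complex.reCLM.hasFDerivAt.comp_hasDerivAt t hwave).deriv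

lemma u_tt_harmonicWave (ω : ℝ) (f : ℝ → ℂ) :
    u_tt (harmonicWave ω f) = harmonicWave ω ((-ω ^ 2 : ℂ) • f) := by
  change u_t (u_t (harmonicWave ω f)) = _
  rw [u_t_harmonicWave, u_t_harmonicWave, smul_smul, mul_mul_mul_comm, Complex.I_mul_I,
    neg_one_mul, ← sq]

lemma deriv_harmonicWave (hf : ∀ x, HasDerivAt f (f' x) x) (t : ℝ) :
    deriv (harmonicWave ω f t) = harmonicWave ω f' t := by
  funext x
  exact (Complex.reCLM.hasFDerivAt.comp_hasDerivAt x ((hf x).const_mul _)).deriv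

lemma u_xx_harmonicWave (hf : ∀ x, HasDerivAt f (f' x) x) (hf' : ∀ x, HasDerivAt f' (f'' x) x) :
    u_xx (harmonicWave ω f) = harmonicWave ω f'' := by
  funext t x
  change deriv (deriv (harmonicWave ω f t)) x = _
  rw [deriv_harmonicWave hf, deriv_harmonicWave hf']

lemma u_txx_harmonicWave (hf : ∀ x, HasDerivAt f (f' x) x) (hf' : ∀ x, HasDerivAt f' (f'' x) x) :
    u_txx (harmonicWave ω f) = harmonicWave ω ((Complex.I * ω) • f'') := by
  change u_xx (u_t (harmonicWave ω f)) = _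
  rw [u_t_harmonicWave]
  exact u_xx_harmonicWave (fun x => (hf x).const_smul _)
    fun x => (hf' x).const_smul (Complex.I * (ω : ℂ))

theorem isClassicalSolution_harmonicWave {σ μ : ℝ} (hf : ContDiff ℝ 2 f)
    (hf₁ : ∀ x, HasDerivAt f (f' x) x) (hf₂ : ∀ x, HasDerivAt f' (f'' x) x)
    (hode : ∀ x ∈ Icc (0 : ℝ) 1,
      (1 + Complex.I * σ * ω) * f'' x = (-ω ^ 2 + Complex.I * μ * ω) * f x)
    (hf_one : f 1 = 0) :
    IsClassicalSolution σ μ (fun t => harmonicWave ω f t 0) (harmonicWave ω f) := by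
  refine ⟨contDiff_harmonicWave hf, fun t _ => ?_, fun t x _ hx => ?_, fun t _ => ⟨rfl, ?_⟩⟩
  · rw [u_t_harmonicWave]
    exact (contDiff_harmonicWave (hf.const_smul (Complex.I * (ω : ℂ)))).comp
      (contDiff_const.prodMk contDiff_id)
  · rw [u_tt_harmonicWave, u_xx_harmonicWave hf₁ hf₂, u_txx_harmonicWave hf₁ hf₂,
      u_t_harmonicWave]
    simp only [harmonicWave, Pi.smul_apply, smul_eq_mul]
    rw [← Complex.re_ofReal_mul, ← Complex.re_ofReal_mul, ← Complex.add_re, ← Complex.sub_re]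
    congr 1
    linear_combination -Complex.exp ((ω * t : ℝ) * Complex.I) * hode x hx
  · simp [harmonicWave, hf_one]

lemma bddC2_harmonicWave (hf : ContDiff ℝ 2 f) (x : ℝ) :
    BddC2 fun t => harmonicWave ω f t x :=
  ⟨(contDiff_harmonicWave hf).comp (contDiff_id.prodMk contDiff_const),
    ‖f x‖, fun t _ => abs_harmonicWave_le ω f t x⟩

lemma supD_harmonicWave_le (ω : ℝ) (f : ℝ → ℂ) (x : ℝ) :
    supD (fun t => harmonicWave ω f t x) ≤ ‖f x‖ := by
  refine Real.sSup_le ?_ (norm_nonneg _)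
  rintro _ ⟨t, -, rfl⟩
  exact abs_harmonicWave_le ω f t x

lemma frequently_harmonicWave_eq_norm (hω : 0 < ω) (f : ℝ → ℂ) (x : ℝ) :
    ∃ᶠ t in atTop, harmonicWave ω f t x = ‖f x‖ := by
  let returnTime (n : ℕ) : ℝ := (n * (2 * π) - (f x).arg) / ω
  have hreturn (n : ℕ) : harmonicWave ω f (returnTime n) x = ‖f x‖ := by
    have hphase : ((ω * returnTime n : ℝ) : ℂ) * Complex.I
        = -((f x).arg * Complex.I) + n * (2 * π * Complex.I) := by
      rw [mul_div_cancel₀ _ hω.ne']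
      push_cast
      ring
    have hexp : Complex.exp ((ω * returnTime n : ℝ) * Complex.I) * f x = ‖f x‖ := by
      rw [hphase, Complex.exp_periodic.nat_mul n]
      nth_rw 2 [← Complex.norm_mul_exp_arg_mul_I (f x)]
      rw [mul_left_comm, ← Complex.exp_add, neg_add_cancel, Complex.exp_zero, mul_one]
    rw [harmonicWave, hexp, Complex.ofReal_re]
  have htop : Tendsto returnTime atTop atTop :=
    (tendsto_atTop_add_const_right _ _
      (tendsto_natCast_atTop_atTop.atTop_mul_const two_pi_pos)).atTop_div_const hω
  exact htop.frequently (Frequently.of_forall hreturn)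

lemma norm_le_limsup_supNorm_harmonicWave (hω : 0 < ω) (hf : ContinuousOn f (Icc 0 1))
    {x : ℝ} (hx : x ∈ Icc (0 : ℝ) 1) :
    ‖f x‖ ≤ limsup (fun t => supNorm (harmonicWave ω f) t) atTop := by
  obtain ⟨M, hM⟩ := isCompact_Icc.exists_bound_of_continuousOn hf
  have hwave (t y : ℝ) (hy : y ∈ Icc (0 : ℝ) 1) : |harmonicWave ω f t y| ≤ M :=
    (abs_harmonicWave_le ω f t y).trans (hM y hy)
  have hsup (t : ℝ) : supNorm (harmonicWave ω f) t ≤ M := by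
    refine Real.sSup_le ?_ ((norm_nonneg _).trans (hM x hx))
    rintro _ ⟨y, hy, rfl⟩
    exact hwave t y hy
  refine le_limsup_of_frequently_le ?_ (isBoundedUnder_of ⟨M, hsup⟩)
  refine (frequently_harmonicWave_eq_norm hω f x).mono fun t ht => ?_
  refine le_csSup ⟨M, ?_⟩ ⟨x, hx, by rw [ht, abs_norm]⟩
  rintro _ ⟨y, hy, rfl⟩
  exact hwave t y hy

end HarmonicWave

section AsymptoticGain

/-- The number `γ` is an asymptotic gain from the boundary input to the spatial sup norm of the
displacement. -/
def IsAsymptoticSupGain (σ μ γ : ℝ) : Prop :=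
  ∀ (d : ℝ → ℝ) (u : ℝ → ℝ → ℝ), BddC2 d → IsClassicalSolution σ μ d u →
    limsup (fun t => supNorm u t) atTop ≤ γ * supD d

variable {σ μ γ ω : ℝ}

theorem IsAsymptoticSupGain.norm_le_mul_norm_zero (hgain : IsAsymptoticSupGain σ μ γ)
    (hγ : 0 ≤ γ) (hω : 0 < ω) {f f' f'' : ℝ → ℂ} (hf : ContDiff ℝ 2 f)
    (hf₁ : ∀ x, HasDerivAt f (f' x) x) (hf₂ : ∀ x, HasDerivAt f' (f'' x) x)
    (hode : ∀ x ∈ Icc (0 : ℝ) 1,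
      (1 + Complex.I * σ * ω) * f'' x = (-ω ^ 2 + Complex.I * μ * ω) * f x)
    (hf_one : f 1 = 0) {x : ℝ} (hx : x ∈ Icc (0 : ℝ) 1) :
    ‖f x‖ ≤ γ * ‖f 0‖ :=
  calc
    ‖f x‖ ≤ limsup (fun t => supNorm (harmonicWave ω f) t) atTop :=
      norm_le_limsup_supNorm_harmonicWave hω hf.continuous.continuousOn hx
    _ ≤ γ * supD (fun t => harmonicWave ω f t 0) :=
      hgain _ _ (bddC2_harmonicWave hf 0) (isClassicalSolution_harmonicWave hf hf₁ hf₂ hode hf_one)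
    _ ≤ γ * ‖f 0‖ := mul_le_mul_of_nonneg_left (supD_harmonicWave_le ω f 0) hγ

theorem IsAsymptoticSupGain.norm_sinh_mul_le (hgain : IsAsymptoticSupGain σ μ γ) (hγ : 0 ≤ γ)
    (hω : 0 < ω) {k : ℂ} (hk : (1 + Complex.I * σ * ω) * k ^ 2 = -ω ^ 2 + Complex.I * μ * ω)
    {x : ℝ} (hx : x ∈ Icc (0 : ℝ) 1) :
    ‖Complex.sinh (k * x)‖ ≤ γ * ‖Complex.sinh k‖ := by
  let f (y : ℝ) : ℂ := Complex.sinh (k * (1 - y))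
  have harg (y : ℝ) : HasDerivAt (fun y : ℝ => k * (1 - (y : ℂ))) (-k) y := by
    simpa using ((hasDerivAt_id y).ofReal_comp.const_sub 1).const_mul k
  have hf₁ (y : ℝ) : HasDerivAt f (Complex.cosh (k * (1 - y)) * -k) y :=
    (Complex.hasDerivAt_sinh _).comp y (harg y)
  have hf₂ (y : ℝ) : HasDerivAt (fun y : ℝ => Complex.cosh (k * (1 - y)) * -k)
      (Complex.sinh (k * (1 - y)) * -k * -k) y :=
    ((Complex.hasDerivAt_cosh _).comp y (harg y)).mul_const (-k)
  have hf : ContDiff ℝ 2 f :=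
    (Complex.contDiff_sinh.restrict_scalars ℝ).comp
      (contDiff_const.mul (contDiff_const.sub Complex.ofRealCLM.contDiff))
  have hbound := hgain.norm_le_mul_norm_zero hγ hω hf hf₁ hf₂
    (fun y _ => by linear_combination f y * hk) (by simp [f])
    (x := 1 - x) ⟨by linarith [hx.2], by linarith [hx.1]⟩
  simpa [f] using hbound

end AsymptoticGain

section WaveNumber

/-- The squared wave number `k² = (-ω² + iμω) / (1 + iσω)` for which `e^{iωt ± kx}` solves the
damped wave equation. -/
def waveNumberSq (σ μ ω : ℝ) : ℂ :=
  (-ω ^ 2 + Complex.I * μ * ω) / (1 + Complex.I * σ * ω)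

/-- The wave number `k = a + ib`. -/
def waveNumber (σ μ ω : ℝ) : ℂ := afreq σ μ ω + bfreq σ μ ω * Complex.I

lemma one_add_I_mul_ne_zero (s ω : ℝ) : 1 + Complex.I * s * ω ≠ 0 := fun h => by
  simpa using congrArg Complex.re h

variable {σ μ ω : ℝ}

lemma waveNumberSq_eq (σ μ ω : ℝ) :
    waveNumberSq σ μ ω = (((μ * σ - 1) * ω ^ 2 / (1 + σ ^ 2 * ω ^ 2) : ℝ) : ℂ)
      + (((μ + σ * ω ^ 2) * ω / (1 + σ ^ 2 * ω ^ 2) : ℝ) : ℂ) * Complex.I := by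
  have hden : (1 + σ ^ 2 * ω ^ 2 : ℂ) ≠ 0 := by
    exact_mod_cast (by positivity : (0 : ℝ) < 1 + σ ^ 2 * ω ^ 2).ne'
  push_cast
  rw [waveNumberSq, div_mul_eq_mul_div, ← add_div, div_eq_div_iff (one_add_I_mul_ne_zero σ ω) hden]
  linear_combination (-(μ + σ * ω ^ 2) * σ * ω ^ 2 : ℂ) * Complex.I_sq

lemma waveNumberSq_re (σ μ ω : ℝ) :
    (waveNumberSq σ μ ω).re = (μ * σ - 1) * ω ^ 2 / (1 + σ ^ 2 * ω ^ 2) := by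
  simp [waveNumberSq_eq, -Complex.ofReal_div]

lemma waveNumberSq_im (σ μ ω : ℝ) :
    (waveNumberSq σ μ ω).im = (μ + σ * ω ^ 2) * ω / (1 + σ ^ 2 * ω ^ 2) := by
  simp [waveNumberSq_eq, -Complex.ofReal_div]

lemma waveNumberSq_ne_zero (hω : ω ≠ 0) : waveNumberSq σ μ ω ≠ 0 := by
  refine div_ne_zero (fun h => hω ?_) (one_add_I_mul_ne_zero σ ω)
  simpa [← Complex.ofReal_pow] using congrArg Complex.re h

lemma norm_waveNumberSq (hω : 0 ≤ ω) : ‖waveNumberSq σ μ ω‖ = rfreq σ μ ω := by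
  rw [waveNumberSq_eq, Complex.norm_add_mul_I, rfreq]
  have hfactor : ((μ * σ - 1) * ω ^ 2 / (1 + σ ^ 2 * ω ^ 2)) ^ 2
        + ((μ + σ * ω ^ 2) * ω / (1 + σ ^ 2 * ω ^ 2)) ^ 2
      = ((μ * σ - 1) ^ 2 * ω ^ 2 + (μ + σ * ω ^ 2) ^ 2) * (ω / (1 + σ ^ 2 * ω ^ 2)) ^ 2 := by
    ring
  rw [hfactor, Real.sqrt_mul' _ (sq_nonneg _), Real.sqrt_sq (by positivity)]
  ring

lemma arg_waveNumberSq (hω : 0 < ω) (him : 0 ≤ μ + σ * ω ^ 2) :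
    (waveNumberSq σ μ ω).arg = θfreq σ μ ω := by
  have him' : 0 ≤ (waveNumberSq σ μ ω).im := by
    rw [waveNumberSq_im]
    positivity
  rw [Complex.arg_of_im_nonneg_of_ne_zero him' (waveNumberSq_ne_zero hω.ne'), waveNumberSq_re,
    norm_waveNumberSq hω.le, div_div, θfreq]

lemma waveNumber_eq_sqrt_mul_exp (σ μ ω : ℝ) :
    waveNumber σ μ ω = √(rfreq σ μ ω) * Complex.exp (θfreq σ μ ω / 2 * Complex.I) := by
  rw [waveNumber, afreq, bfreq, Complex.exp_mul_I]
  push_cast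
  ring

lemma waveNumber_sq (hω : 0 < ω) (him : 0 ≤ μ + σ * ω ^ 2) :
    waveNumber σ μ ω ^ 2 = waveNumberSq σ μ ω := by
  have hr : 0 ≤ rfreq σ μ ω := norm_waveNumberSq (σ := σ) (μ := μ) hω.le ▸ norm_nonneg _
  calc
    waveNumber σ μ ω ^ 2 = rfreq σ μ ω * Complex.exp (θfreq σ μ ω * Complex.I) := by
      rw [waveNumber_eq_sqrt_mul_exp, mul_pow, ← Complex.ofReal_pow, Real.sq_sqrt hr,
        ← Complex.exp_nat_mul]
      push_cast
      ring_nf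
    _ = waveNumberSq σ μ ω := by
      rw [← norm_waveNumberSq hω.le, ← arg_waveNumberSq hω him, Complex.norm_mul_exp_arg_mul_I]

lemma waveNumber_dispersion (hω : 0 < ω) (him : 0 ≤ μ + σ * ω ^ 2) :
    (1 + Complex.I * σ * ω) * waveNumber σ μ ω ^ 2 = -ω ^ 2 + Complex.I * μ * ω := by
  rw [waveNumber_sq hω him, waveNumberSq, mul_div_cancel₀ _ (one_add_I_mul_ne_zero σ ω)]

lemma cosh_sub_cos_eq_norm_sinh_waveNumber_sq (σ μ ω x : ℝ) :
    Real.cosh (2 * afreq σ μ ω * x) - Real.cos (2 * bfreq σ μ ω * x)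
      = 2 * ‖Complex.sinh (waveNumber σ μ ω * x)‖ ^ 2 := by
  simp [two_mul_norm_sinh_sq, waveNumber, mul_assoc]

end WaveNumber

theorem asymptotic_gain_sup_lower_bound_general {σ μ γ : ℝ} (hσ : 0 ≤ σ) (hμ : 0 ≤ μ)
    (hγ : 0 ≤ γ) (hgain : IsAsymptoticSupGain σ μ γ) :
    γ ∈ upperBounds {y : ℝ | ∃ ω : ℝ, 0 < ω ∧
      y = Real.sqrt
        ((sSup {z : ℝ | ∃ x ∈ Set.Icc (0:ℝ) 1,
            z = Real.cosh (2 * afreq σ μ ω * x) - Real.cos (2 * bfreq σ μ ω * x)}) /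
          (Real.cosh (2 * afreq σ μ ω) - Real.cos (2 * bfreq σ μ ω)))} := by
  rintro _ ⟨ω, hω, rfl⟩
  have hdisp := waveNumber_dispersion hω (by positivity : 0 ≤ μ + σ * ω ^ 2)
  have hden := cosh_sub_cos_eq_norm_sinh_waveNumber_sq σ μ ω 1
  rw [mul_one, mul_one, Complex.ofReal_one, mul_one] at hden
  rw [hden]
  -- The denominator vanishes only at a resonance of the undamped equation, which admits no gain.
  refine (Real.sqrt_le_left hγ).2 (div_le_of_le_mul₀ (by positivity) (by positivity) ?_)
  refine Real.sSup_le ?_ (by positivity)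
  rintro _ ⟨x, hx, rfl⟩
  rw [cosh_sub_cos_eq_norm_sinh_waveNumber_sq, mul_left_comm, ← mul_pow]
  gcongr
  exact hgain.norm_sinh_mul_le hγ hω hdisp hx

/-- any asymptotic-gain constant `γ` for the spatial sup norm satisfies
`γ ≥ sup_{ω>0} √( max_{x∈[0,1]} (cosh(2ax) − cos(2bx)) / (cosh(2a) − cos(2b)) )`. -/
theorem asymptotic_gain_sup_lower_bound
    (σ μ : ℝ) (hσ : 0 < σ) (hμ : 0 ≤ μ)
    (γ : ℝ) (hγ : 0 ≤ γ)
    (hgain : ∀ (d : ℝ → ℝ) (u : ℝ → ℝ → ℝ), BddC2 d → IsClassicalSolution σ μ d u →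
      Filter.limsup (fun t => supNorm u t) Filter.atTop ≤ γ * supD d) :
    γ ≥ sSup {y : ℝ | ∃ ω : ℝ, 0 < ω ∧
      y = Real.sqrt
        ((sSup {z : ℝ | ∃ x ∈ Set.Icc (0:ℝ) 1,
            z = Real.cosh (2 * afreq σ μ ω * x) - Real.cos (2 * bfreq σ μ ω * x)}) /
          (Real.cosh (2 * afreq σ μ ω) - Real.cos (2 * bfreq σ μ ω)))} :=
  Real.sSup_le (fun _ hy => asymptotic_gain_sup_lower_bound_general hσ.le hμ hγ hgain hy) hγ
end
end
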